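/- arXiv:2409.06849 — 2 statements merged into one kernel-verified Lean document; each statement's English description precedes it below -/
import Mathlib

section
/- Let d ≥ 3. Set T_k = (0, ε, k) for k = 0,1,…,d−2 and T_{d−1} = (0, d−1, 0). Then for every bispecial factor w of u_d there exist k ∈ {0,…,d−1} and n ∈ ℕ such that f^n(T_k) is a triplet of 𝒯 whose middle component equals w or equals the reversal w̄ of w. -/
namespace RichRT

variable {A : Type*}

/-- The word `w` occurs in the sequence `u` at position `j`. -/
def OccursAt (w : List A) (u : ℕ → A) (j : ℕ) : Prop :=
  w = (List.range w.length).map fun t => u (j + t)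

/-- `w` is a factor of the infinite sequence `u`. -/
def IsFactorS (w : List A) (u : ℕ → A) : Prop :=
  ∃ j : ℕ, OccursAt w u j

/-- `u` is recurrent: every factor occurs infinitely often. -/
def Recurrent (u : ℕ → A) : Prop :=
  ∀ w : List A, IsFactorS w u → ∀ N : ℕ, ∃ j, N ≤ j ∧ OccursAt w u j

/-- The number of distinct palindromic factors of a finite word. -/
noncomputable def palCount (w : List A) : ℕ :=
  Set.ncard {p : List A | p <:+: w ∧ p.reverse = p}

/-- A finite word of length `n` is rich if it has exactly `n+1` palindromic factors. -/
def RichWord (w : List A) : Prop := palCount w = w.length + 1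

/-- A sequence is rich if all its factors are rich. -/
def RichSeq (u : ℕ → A) : Prop := ∀ w : List A, IsFactorS w u → RichWord w

/-- The prefix of length `k` of the periodic sequence `vvv⋯`. -/
def powPref (v : List A) (k : ℕ) : List A := ((List.replicate k v).flatten).take k

/-- The set of exponents `k/|v|` of fractional powers `v^(k/|v|)` occurring in `u`,
with `|v| ≥ n`. -/
def expSet (u : ℕ → A) (n : ℕ) : Set ℝ :=
  {x | ∃ (v : List A) (k : ℕ), v ≠ [] ∧ n ≤ v.length ∧
    IsFactorS (powPref v k) u ∧ x = (k : ℝ) / (v.length : ℝ)}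

/-- The critical exponent of a sequence, with values in `EReal`. -/
noncomputable def critExp (u : ℕ → A) : EReal :=
  sSup ((fun x : ℝ => (x : EReal)) '' expSet u 0)

/-- The asymptotic critical exponent of a sequence: `⊤` if the critical exponent is `⊤`,
otherwise the limit (= infimum, by monotonicity) over `n` of the suprema of exponents of
powers `v^e` with `|v| ≥ n`. -/
noncomputable def acritExp (u : ℕ → A) : EReal :=
  if critExp u = ⊤ then ⊤
  else ⨅ n : ℕ, sSup ((fun x : ℝ => (x : EReal)) '' expSet u n)

/-- The morphism `φ_d` on letters: `i ↦ 0(i+1)` for `i < d-1`, `d-1 ↦ 0(d-1)(d-1)`. -/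
def phiL (d : ℕ) (i : ℕ) : List ℕ :=
  if i < d - 1 then [0, i + 1] else [0, d - 1, d - 1]

/-- The morphism `φ_d` on words. -/
def phiW (d : ℕ) (w : List ℕ) : List ℕ := w.flatMap (phiL d)

/-- `u` is the fixed point of `φ_d`: it begins with `0` and `φ_d(u) = u`, i.e. the image
of every prefix of `u` is again a prefix of `u`. -/
def IsPhiFixed (d : ℕ) (u : ℕ → ℕ) : Prop :=
  u 0 = 0 ∧ ∀ m : ℕ, OccursAt (phiW d ((List.range m).map u)) u 0

/-- Left extensions of `w` in `u`. -/
def Lext (u : ℕ → ℕ) (w : List ℕ) : Set (List ℕ) :=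
  {x | ∃ i : ℕ, x = i :: w ∧ IsFactorS x u}

/-- Right extensions of `w` in `u`. -/
def Rext (u : ℕ → ℕ) (w : List ℕ) : Set (List ℕ) :=
  {x | ∃ i : ℕ, x = w ++ [i] ∧ IsFactorS x u}

/-- Both-sided extensions of `w` in `u`. -/
def Bext (u : ℕ → ℕ) (w : List ℕ) : Set (List ℕ) :=
  {x | ∃ i j : ℕ, x = i :: (w ++ [j]) ∧ IsFactorS x u}

/-- `w` is a bispecial factor of `u`. -/
def Bispecial (u : ℕ → ℕ) (w : List ℕ) : Prop :=
  IsFactorS w u ∧ 2 ≤ (Lext u w).ncard ∧ 2 ≤ (Rext u w).ncard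

/-- The bilateral order `b(w) = #Bext(w) − #Lext(w) − #Rext(w) + 1`. -/
noncomputable def bord (u : ℕ → ℕ) (w : List ℕ) : ℤ :=
  ((Bext u w).ncard : ℤ) - ((Lext u w).ncard : ℤ) - ((Rext u w).ncard : ℤ) + 1

/-- The palindromes `F_0 = ε`, `F_i = φ(F_{i-1})0`. -/
def Fword (d : ℕ) : ℕ → List ℕ
  | 0 => []
  | i + 1 => phiW d (Fword d i) ++ [0]

/-- Membership in the set `𝒯` of bispecial triplets. -/
def TripleMem (d : ℕ) (u : ℕ → ℕ) (t : ℕ × List ℕ × ℕ) : Prop :=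
  Bispecial u t.2.1 ∧ t.1 < d - 1 ∧ t.2.2 < d - 1 ∧
    IsFactorS (t.1 :: t.2.1) u ∧ IsFactorS (t.2.1 ++ [t.2.2]) u

/-- The map `f` on triplets. -/
def fmap (d : ℕ) (t : ℕ × List ℕ × ℕ) : ℕ × List ℕ × ℕ :=
  ((t.1 + 1) % (d - 1),
   (if t.1 = d - 2 then [d - 1] else []) ++ phiW d t.2.1 ++ [0] ++
     (if t.2.2 = d - 2 then [d - 1] else []),
   (t.2.2 + 1) % (d - 1))

/-- The initial triplets `T_k = (0, ε, k)` for `k ≤ d-2` and `T_{d-1} = (0, d-1, 0)`. -/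
def Tinit (d k : ℕ) : ℕ × List ℕ × ℕ :=
  if k = d - 1 then (0, [d - 1], 0) else (0, ([] : List ℕ), k)

/-- The Parikh vector of a word. -/
def parikh (d : ℕ) (w : List ℕ) : Fin d → ℕ := fun i => w.count (i : ℕ)

/-- The incidence matrix of `φ_d`. -/
def Mmat (d : ℕ) : Matrix (Fin d) (Fin d) ℕ := fun i j => (phiL d (j : ℕ)).count (i : ℕ)

/-- `r` is a return word to `w` in `u`. -/
def ReturnWord (u : ℕ → ℕ) (w r : List ℕ) : Prop :=
  ∃ j ℓ : ℕ, j < ℓ ∧ OccursAt w u j ∧ OccursAt w u ℓ ∧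
    (∀ m, j < m → m < ℓ → ¬ OccursAt w u m) ∧
    r = (List.range (ℓ - j)).map fun t => u (j + t)

/-- `R` is a complete return word to `w` in `u`. -/
def CompleteReturn (u : ℕ → ℕ) (w R : List ℕ) : Prop :=
  ∃ r : List ℕ, ReturnWord u w r ∧ R = r ++ w


/-- prefix of length m -/
def pre (u : ℕ → ℕ) (m : ℕ) : List ℕ := (List.range m).map u

lemma pre_add (u : ℕ → ℕ) (a b : ℕ) :
    pre u (a + b) = pre u a ++ (List.range b).map fun t => u (a + t) := by
  simp [pre, List.range_add, Function.comp_def]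

lemma fac_iff (u : ℕ → ℕ) (w : List ℕ) : IsFactorS w u ↔ ∃ m, w <:+: pre u m := by
  constructor
  · rintro ⟨j, hj⟩
    refine ⟨j + w.length, pre u j, [], ?_⟩
    rw [pre_add, ← hj]; simp
  · rintro ⟨m, p, q, h⟩
    refine ⟨p.length, ?_⟩
    have hl : m = p.length + (w.length + q.length) := by
      have := congrArg List.length h
      simp [pre] at this; omega
    rw [hl, pre_add, List.append_assoc] at h
    have h2 := (List.append_inj h (by simp [pre])).2
    rw [List.range_add, List.map_append] at h2
    exact (List.append_inj h2 (by simp)).1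

lemma fac_infix {u : ℕ → ℕ} {v w : List ℕ} (h : IsFactorS w u) (hv : v <:+: w) :
    IsFactorS v u := by
  rw [fac_iff] at *
  obtain ⟨m, hm⟩ := h
  exact ⟨m, hv.trans hm⟩

lemma fac_pre (u : ℕ → ℕ) (m : ℕ) : IsFactorS (pre u m) u :=
  (fac_iff _ _).2 ⟨m, List.infix_refl _⟩

lemma phiW_append (d : ℕ) (v w : List ℕ) : phiW d (v ++ w) = phiW d v ++ phiW d w := by
  simp [phiW]

lemma phiW_cons (d a : ℕ) (w : List ℕ) : phiW d (a :: w) = phiL d a ++ phiW d w := by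
  simp [phiW]

@[simp] lemma phiW_nil (d : ℕ) : phiW d [] = [] := rfl

lemma phiW_pre {d : ℕ} {u : ℕ → ℕ} (hu : IsPhiFixed d u) (m : ℕ) :
    phiW d (pre u m) = pre u (phiW d (pre u m)).length := by
  have h := hu.2 m
  unfold OccursAt at h
  simpa [pre] using h

lemma phiL_len (d a : ℕ) : 2 ≤ (phiL d a).length := by
  unfold phiL; split <;> simp

lemma phiW_len (d : ℕ) (w : List ℕ) : 2 * w.length ≤ (phiW d w).length := by
  induction w with
  | nil => simp
  | cons a w ih =>
    have := phiL_len d a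
    rw [phiW_cons]; simp; omega

lemma pre_prefix (u : ℕ → ℕ) {a b : ℕ} (h : a ≤ b) : pre u a <+: pre u b := by
  obtain ⟨c, rfl⟩ := Nat.exists_eq_add_of_le h
  rw [pre_add]; exact List.prefix_append _ _

lemma infix_phiW {d : ℕ} {v w : List ℕ} (h : v <:+: w) : phiW d v <:+: phiW d w := by
  obtain ⟨p, q, rfl⟩ := h
  exact ⟨phiW d p, phiW d q, by simp [phiW_append]⟩

lemma fac_phi {d : ℕ} {u : ℕ → ℕ} (hu : IsPhiFixed d u) {w : List ℕ} (h : IsFactorS w u) :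
    IsFactorS (phiW d w) u := by
  rw [fac_iff] at *
  obtain ⟨m, hm⟩ := h
  exact ⟨(phiW d (pre u m)).length, by rw [← phiW_pre hu m]; exact infix_phiW hm⟩

lemma fac_desub {d : ℕ} {u : ℕ → ℕ} (hu : IsPhiFixed d u) {w : List ℕ} (h : IsFactorS w u) :
    ∃ y, IsFactorS y u ∧ w <:+: phiW d y := by
  rw [fac_iff] at h
  obtain ⟨m, hm⟩ := h
  refine ⟨pre u m, fac_pre u m, hm.trans ?_⟩
  rw [phiW_pre hu]
  apply (pre_prefix u _).isInfix
  have := phiW_len d (pre u m)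
  have h2 : (pre u m).length = m := by simp [pre]
  omega

lemma fac_right {u : ℕ → ℕ} {w : List ℕ} (h : IsFactorS w u) : ∃ b, IsFactorS (w ++ [b]) u := by
  obtain ⟨j, hj⟩ := h
  refine ⟨u (j + w.length), j, ?_⟩
  unfold OccursAt at *
  simp only [List.length_append, List.length_singleton, List.range_succ, List.map_append]
  rw [← hj]; simp

lemma phiL_head (d b : ℕ) : ∃ r, phiL d b = 0 :: r := by
  unfold phiL; split <;> simp

lemma fac_phi0 {d : ℕ} {u : ℕ → ℕ} (hu : IsPhiFixed d u) {w : List ℕ} (h : IsFactorS w u) :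
    IsFactorS (phiW d w ++ [0]) u := by
  obtain ⟨b, hb⟩ := fac_right h
  have := fac_phi hu hb
  obtain ⟨r, hr⟩ := phiL_head d b
  rw [phiW_append, phiW_cons, hr] at this
  exact fac_infix this ⟨[], r, by simp⟩

lemma phiL_pal (d a : ℕ) : 0 :: (phiL d a).reverse = phiL d a ++ [0] := by
  unfold phiL; split <;> simp

lemma phiW_rev (d : ℕ) (w : List ℕ) : 0 :: (phiW d w).reverse = phiW d w.reverse ++ [0] := by
  induction w with
  | nil => simp
  | cons a w ih =>
    rw [phiW_cons, List.reverse_append, List.reverse_cons, phiW_append, phiW_cons,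
      ← List.cons_append, ih]
    have := phiL_pal d a
    simp [← this]

lemma phiW_rev' (d : ℕ) (w : List ℕ) :
    (phiW d w ++ [0]).reverse = phiW d w.reverse ++ [0] := by
  rw [← phiW_rev]; simp

lemma fac_rev_pre {d : ℕ} {u : ℕ → ℕ} (hu : IsPhiFixed d u) (m : ℕ) :
    IsFactorS (pre u m).reverse u := by
  induction m using Nat.strong_induction_on with
  | _ m ih =>
    by_cases hm : m ≤ 1
    · have : (pre u m).reverse = pre u m := by
        interval_cases m <;> simp [pre]
      rw [this]; exact fac_pre u m
    · have h1 := ih (m - 1) (by omega)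
      have h2 := fac_phi0 hu h1
      rw [← phiW_rev'] at h2
      refine fac_infix h2 ?_
      rw [List.reverse_infix, phiW_pre hu]
      refine List.IsInfix.trans (pre_prefix u ?_).isInfix (List.prefix_append _ _).isInfix
      have := phiW_len d (pre u (m-1))
      have h2 : (pre u (m-1)).length = m-1 := by simp [pre]
      omega

lemma fac_rev {d : ℕ} {u : ℕ → ℕ} (hu : IsPhiFixed d u) {w : List ℕ} (h : IsFactorS w u) :
    IsFactorS w.reverse u := by
  rw [fac_iff] at h
  obtain ⟨m, hm⟩ := h
  exact fac_infix (fac_rev_pre hu m) (List.reverse_infix.2 hm)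

lemma fac_left {d : ℕ} {u : ℕ → ℕ} (hu : IsPhiFixed d u) {w : List ℕ} (h : IsFactorS w u) :
    ∃ a, IsFactorS (a :: w) u := by
  obtain ⟨b, hb⟩ := fac_right (fac_rev hu h)
  exact ⟨b, by simpa using fac_rev hu hb⟩

lemma phiW_lt {d : ℕ} (hd : 3 ≤ d) (y : List ℕ) : ∀ a ∈ phiW d y, a < d := by
  intro a ha
  simp only [phiW, List.mem_flatMap] at ha
  obtain ⟨x, _, hx⟩ := ha
  unfold phiL at hx
  split at hx <;> simp at hx <;> omega

lemma fac_lt {d : ℕ} (hd : 3 ≤ d) {u : ℕ → ℕ} (hu : IsPhiFixed d u) {w : List ℕ}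
    (h : IsFactorS w u) : ∀ a ∈ w, a < d := by
  obtain ⟨y, _, hy⟩ := fac_desub hu h
  exact fun a ha => phiW_lt hd y a (hy.subset ha)

/-- parsing at a zero -/
lemma parse0 {d : ℕ} (hd : 3 ≤ d) (y : List ℕ) : ∀ p q, phiW d y = p ++ 0 :: q →
    ∃ y1 y2, y = y1 ++ y2 ∧ phiW d y1 = p ∧ phiW d y2 = 0 :: q := by
  induction y with
  | nil => intro p q h; simp at h
  | cons a y ih =>
    intro p q h
    cases p with
    | nil => exact ⟨[], a :: y, rfl, rfl, h⟩
    | cons x p =>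
      rw [phiW_cons] at h
      have : ∃ p', x :: p = phiL d a ++ p' ∧ phiW d y = p' ++ 0 :: q := by
        unfold phiL at h ⊢
        have hd1 : d - 1 ≠ 0 := by omega
        split at h
        · rcases p with _ | ⟨x2, p⟩ <;> simp at h ⊢ <;> grind
        · rcases p with _ | ⟨x2, _ | ⟨x3, p⟩⟩ <;> simp at h ⊢ <;> grind
      obtain ⟨p', h1, h2⟩ := this
      obtain ⟨y1, y2, rfl, h4, h5⟩ := ih _ _ h2
      exact ⟨a :: y1, y2, rfl, by rw [phiW_cons, h4, h1], h5⟩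

lemma phiW_cons_cases {d : ℕ} {y q : List ℕ} {x : ℕ} (h : phiW d y = x :: q) : x = 0 := by
  cases y with
  | nil => simp at h
  | cons a y =>
    obtain ⟨r, hr⟩ := phiL_head d a
    rw [phiW_cons, hr] at h
    simp at h; exact h.1.symm

/-- unique parsing of φ(v)0 -/
lemma parse_pref {d : ℕ} (hd : 3 ≤ d) (v : List ℕ) : ∀ y q, (∀ a ∈ v, a < d) → (∀ a ∈ y, a < d) →
    phiW d y = phiW d v ++ 0 :: q → ∃ y2, y = v ++ y2 ∧ phiW d y2 = 0 :: q := by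
  induction v with
  | nil => intro y q _ _ h; exact ⟨y, rfl, h⟩
  | cons b v ih =>
    intro y q hv hy h
    cases y with
    | nil => 
      have := congrArg List.length h
      simp at this
    | cons a y =>
      have hd1 : d - 1 ≠ 0 := by omega
      have hb := hv b (by simp)
      have ha := hy a (by simp)
      have key : a = b ∧ phiW d y = phiW d v ++ 0 :: q := by
        rw [phiW_cons, phiW_cons, List.append_assoc] at h
        obtain ⟨M, hM⟩ : ∃ M, phiW d v ++ 0 :: q = 0 :: M := by
          rcases hV : phiW d v with _ | ⟨x, m⟩
          · simp
          · have := phiW_cons_cases hV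
            subst this; simp
        rw [hM] at h ⊢
        have hY := @phiW_cons_cases d y
        clear hM ih hv hy
        generalize phiW d y = Y at *
        unfold phiL at h
        rcases Y with _ | ⟨z, Z⟩
        · split at h <;> split at h <;> simp at h <;> omega
        · obtain rfl := hY rfl
          split at h <;> split at h <;> simp at h <;> simp <;> first | omega | (refine ⟨by omega, ?_⟩; simp_all)
      obtain ⟨rfl, h2⟩ := key
      obtain ⟨y2, rfl, h3⟩ := ih y q (fun a ha => hv a (by simp [ha])) (fun a ha => hy a (by simp [ha])) h2
      exact ⟨y2, rfl, h3⟩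

lemma split_first (w : List ℕ) (h : 0 ∈ w) : ∃ s r, w = s ++ 0 :: r ∧ 0 ∉ s := by
  obtain ⟨s, r, h1, h2⟩ := List.eq_append_cons_of_mem h
  exact ⟨s, r, h1, h2⟩

lemma split_last (w : List ℕ) (h : 0 ∈ w) : ∃ s r, w = s ++ 0 :: r ∧ 0 ∉ r := by
  obtain ⟨s, r, h1, h2⟩ := split_first w.reverse (by simpa using h)
  refine ⟨r.reverse, s.reverse, ?_, by simpa using h2⟩
  have := congrArg List.reverse h1
  simpa using this

lemma decomp {d : ℕ} (hd : 3 ≤ d) {u : ℕ → ℕ} (hu : IsPhiFixed d u) {w : List ℕ}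
    (h : IsFactorS w u) (h0 : 0 ∈ w) :
    ∃ s v t, w = s ++ phiW d v ++ 0 :: t ∧ 0 ∉ s ∧ 0 ∉ t ∧ IsFactorS v u := by
  obtain ⟨y, hy, P, Q, hPQ⟩ := fac_desub hu h
  obtain ⟨s, r, rfl, hs⟩ := split_first w h0
  obtain ⟨m, t, hm, ht⟩ := split_last (0 :: r) (by simp)
  rw [hm] at hPQ
  obtain ⟨y1, y2, rfl, h1, h2⟩ := parse0 hd y (P ++ s ++ m) (t ++ Q) (by rw [← hPQ]; simp)
  rw [hm]
  rcases m with _ | ⟨x, m⟩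
  · exact ⟨s, [], t, by simp, hs, ht, fac_infix h List.nil_infix⟩
  · simp only [List.cons_append, List.cons.injEq] at hm
    obtain ⟨rfl, hm⟩ := hm
    obtain ⟨z1, z2, rfl, h3, h4⟩ := parse0 hd y1 (P ++ s) m h1
    exact ⟨s, z2, t, by rw [h4]; simp, hs, ht, fac_infix hy ⟨z1, y2, by simp⟩⟩

/-- relation between extension letter of the image and of the preimage -/
def R (d : ℕ) (s : List ℕ) (a a' : ℕ) : Prop :=
  a' < d ∧ ((s = [] ∧ a = min (a' + 1) (d - 1)) ∨
    (s = [d - 1] ∧ ((a' = d - 2 ∧ a = 0) ∨ (a' = d - 1 ∧ a = d - 1))))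

lemma R_fun {d : ℕ} (hd : 3 ≤ d) {s : List ℕ} {a1 a2 a' : ℕ} (h1 : R d s a1 a') (h2 : R d s a2 a') :
    a1 = a2 := by
  unfold R at *
  obtain ⟨_, ⟨rfl, h1⟩ | ⟨rfl, h1⟩⟩ := h1 <;> simp at h2 <;> omega

lemma ext_left {d : ℕ} (hd : 3 ≤ d) {y P s : List ℕ} {a : ℕ} (hs : s = [] ∨ s = [d - 1])
    (hy : ∀ x ∈ y, x < d) (h : phiW d y = P ++ a :: s) :
    ∃ z a', y = z ++ [a'] ∧ R d s a a' := by
  rcases List.eq_nil_or_concat' y with rfl | ⟨z, a', rfl⟩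
  · simp at h
  · refine ⟨z, a', rfl, hy a' (by simp), ?_⟩
    have ha := hy a' (by simp)
    have h := congrArg List.reverse h
    rw [phiW_append, phiW_cons] at h
    unfold phiL at h
    rcases hs with rfl | rfl
    · split at h <;> simp at h <;> simp <;> omega
    · split at h <;> simp at h <;> simp <;> omega

lemma ext_right {d : ℕ} (hd : 3 ≤ d) {y Q t : List ℕ} {b : ℕ} (ht : t = [] ∨ t = [d - 1])
    (hy : ∀ x ∈ y, x < d) (h : phiW d y = 0 :: t ++ b :: Q) :
    ∃ z b', y = b' :: z ∧ R d t b b' := by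
  rcases y with _ | ⟨b', z⟩
  · simp at h
  · refine ⟨z, b', rfl, hy b' (by simp), ?_⟩
    have ha := hy b' (by simp)
    rw [phiW_cons] at h
    unfold phiL at h
    rcases ht with rfl | rfl
    · split at h <;> simp at h <;> simp <;> omega
    · split at h <;> simp at h <;> simp
      · have := phiW_cons_cases h.2
        omega
      · omega

lemma ext_pull {d : ℕ} (hd : 3 ≤ d) {u : ℕ → ℕ} (hu : IsPhiFixed d u) {s v t : List ℕ} {a b : ℕ}
    (hs : s = [] ∨ s = [d - 1]) (ht : t = [] ∨ t = [d - 1]) (hv : IsFactorS v u)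
    (h : IsFactorS (a :: (s ++ phiW d v ++ 0 :: t) ++ [b]) u) :
    ∃ a' b', IsFactorS (a' :: v ++ [b']) u ∧ R d s a a' ∧ R d t b b' := by
  obtain ⟨y, hy, P, Q, hPQ⟩ := fac_desub hu h
  have hyl := fac_lt hd hu hy
  have : ∃ y1 y2, y = y1 ++ v ++ y2 ∧ phiW d y1 = P ++ a :: s ∧ phiW d y2 = 0 :: t ++ b :: Q := by
    obtain ⟨m, hm⟩ : ∃ m, phiW d v ++ 0 :: t ++ b :: Q = 0 :: m := by
      rcases hV : phiW d v with _ | ⟨x, m⟩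
      · simp
      · have := phiW_cons_cases hV
        subst this; simp
    obtain ⟨y1, y2, rfl, h1, h2⟩ := parse0 hd y (P ++ a :: s) m (by
      rw [← hm, ← hPQ]; simp)
    rw [← hm] at h2
    obtain ⟨y3, rfl, h3⟩ := parse_pref hd v y2 (t ++ b :: Q) (fac_lt hd hu hv)
      (fun x hx => hyl x (by simp [hx])) (by rw [h2]; simp)
    exact ⟨y1, y3, by simp, h1, by simpa using h3⟩
  obtain ⟨y1, y2, rfl, h1, h2⟩ := this
  obtain ⟨z1, a', rfl, ha⟩ := ext_left hd hs (fun x hx => hyl x (by simp [hx])) h1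
  obtain ⟨z2, b', rfl, hb⟩ := ext_right hd ht (fun x hx => hyl x (by simp [hx])) h2
  exact ⟨a', b', fac_infix hy ⟨z1, z2, by simp⟩, ha, hb⟩

lemma two_phi {d : ℕ} (hd : 3 ≤ d) (y : List ℕ) : ∀ p q a b, phiW d y = p ++ a :: b :: q →
    (a = 0 ∧ 0 < b) ∨ (b = 0 ∧ 0 < a) ∨ (a = d - 1 ∧ b = d - 1) := by
  induction y with
  | nil => intro p q a b h; simp at h
  | cons c y ih =>
    intro p q a b h
    have hc := @phiW_cons_cases d y
    rw [phiW_cons] at h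
    unfold phiL at h
    generalize phiW d y = Y at *
    split at h
    · rcases p with _ | ⟨x1, _ | ⟨x2, p⟩⟩ <;> simp at h
      · omega
      · have := hc h.2.2; omega
      · exact ih _ _ _ _ h.2.2
    · rcases p with _ | ⟨x1, _ | ⟨x2, _ | ⟨x3, p⟩⟩⟩ <;> simp at h
      · omega
      · omega
      · have := hc h.2.2.2; omega
      · exact ih _ _ _ _ h.2.2.2

lemma three_phi {d : ℕ} (y : List ℕ) : ∀ p q a b c, phiW d y = p ++ a :: b :: c :: q →
    a = 0 ∨ b = 0 ∨ c = 0 := by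
  induction y with
  | nil => intro p q a b c h; simp at h
  | cons e y ih =>
    intro p q a b c h
    have hc := @phiW_cons_cases d y
    rw [phiW_cons] at h
    unfold phiL at h
    generalize phiW d y = Y at *
    split at h
    · rcases p with _ | ⟨x1, _ | ⟨x2, p⟩⟩ <;> simp at h
      · omega
      · have := hc h.2.2; omega
      · exact ih _ _ _ _ _ h.2.2
    · rcases p with _ | ⟨x1, _ | ⟨x2, _ | ⟨x3, p⟩⟩⟩ <;> simp at h
      · omega
      · have := hc h.2.2.2; omega
      · have := hc h.2.2.2; omega
      · exact ih _ _ _ _ _ h.2.2.2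

lemma fac_two {d : ℕ} (hd : 3 ≤ d) {u : ℕ → ℕ} (hu : IsPhiFixed d u) {a b : ℕ} {q : List ℕ}
    (h : IsFactorS (a :: b :: q) u) :
    (a = 0 ∧ 0 < b) ∨ (b = 0 ∧ 0 < a) ∨ (a = d - 1 ∧ b = d - 1) := by
  obtain ⟨y, _, P, Q, h⟩ := fac_desub hu h
  exact two_phi hd y P (q ++ Q) a b (by rw [← h]; simp)

lemma fac_three {d : ℕ} {u : ℕ → ℕ} (hu : IsPhiFixed d u) {a b c : ℕ} {q : List ℕ}
    (h : IsFactorS (a :: b :: c :: q) u) : a = 0 ∨ b = 0 ∨ c = 0 := by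
  obtain ⟨y, _, P, Q, h⟩ := fac_desub hu h
  exact three_phi y P (q ++ Q) a b c (by rw [← h]; simp)

def LS (u : ℕ → ℕ) (w : List ℕ) : Prop :=
  ∃ a1 a2, a1 ≠ a2 ∧ IsFactorS (a1 :: w) u ∧ IsFactorS (a2 :: w) u

def RS (u : ℕ → ℕ) (w : List ℕ) : Prop :=
  ∃ a1 a2, a1 ≠ a2 ∧ IsFactorS (w ++ [a1]) u ∧ IsFactorS (w ++ [a2]) u

lemma RS_rev {d : ℕ} {u : ℕ → ℕ} (hu : IsPhiFixed d u) {w : List ℕ} (h : RS u w) :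
    LS u w.reverse := by
  obtain ⟨a, b, h, h1, h2⟩ := h
  exact ⟨a, b, h, by simpa using fac_rev hu h1, by simpa using fac_rev hu h2⟩

lemma LS_head {d : ℕ} (hd : 3 ≤ d) {u : ℕ → ℕ} (hu : IsPhiFixed d u) {s r : List ℕ}
    (h : LS u (s ++ r)) (hs : 0 ∉ s) : s = [] ∨ s = [d - 1] := by
  obtain ⟨a, b, hab, h1, h2⟩ := h
  rcases s with _ | ⟨x, _ | ⟨z, s⟩⟩
  · simp
  · have e1 := fac_two hd hu h1
    have e2 := fac_two hd hu h2
    simp at hs ⊢; omega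
  · have e1 := fac_three hu h1
    have e2 := fac_three hu h2
    simp at hs; omega

lemma bisp_LS {u : ℕ → ℕ} {w : List ℕ} (h : Bispecial u w) : LS u w ∧ RS u w := by
  obtain ⟨_, h1, h2⟩ := h
  constructor
  · obtain ⟨x, y, ⟨a, rfl, ha⟩, ⟨b, rfl, hb⟩, hne⟩ := (Set.one_lt_ncard_iff (Set.finite_of_ncard_pos (by omega))).1 h1
    exact ⟨a, b, by rintro rfl; exact hne rfl, ha, hb⟩
  · obtain ⟨x, y, ⟨a, rfl, ha⟩, ⟨b, rfl, hb⟩, hne⟩ := (Set.one_lt_ncard_iff (Set.finite_of_ncard_pos (by omega))).1 h2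
    exact ⟨a, b, by rintro rfl; exact hne rfl, ha, hb⟩

lemma Rext_rev {d : ℕ} {u : ℕ → ℕ} (hu : IsPhiFixed d u) (w : List ℕ) :
    Rext u w.reverse = List.reverse '' Lext u w := by
  ext x; constructor
  · rintro ⟨i, rfl, h⟩
    exact ⟨i :: w, ⟨i, rfl, by simpa using fac_rev hu h⟩, by simp⟩
  · rintro ⟨_, ⟨i, rfl, h⟩, rfl⟩
    exact ⟨i, by simp, fac_rev hu h⟩

lemma Lext_rev {d : ℕ} {u : ℕ → ℕ} (hu : IsPhiFixed d u) (w : List ℕ) :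
    Lext u w.reverse = List.reverse '' Rext u w := by
  ext x; constructor
  · rintro ⟨i, rfl, h⟩
    exact ⟨w ++ [i], ⟨i, rfl, by simpa using fac_rev hu h⟩, by simp⟩
  · rintro ⟨_, ⟨i, rfl, h⟩, rfl⟩
    exact ⟨i, by simp, fac_rev hu h⟩

lemma bisp_rev {d : ℕ} {u : ℕ → ℕ} (hu : IsPhiFixed d u) {w : List ℕ} (h : Bispecial u w) :
    Bispecial u w.reverse := by
  refine ⟨fac_rev hu h.1, ?_, ?_⟩
  · rw [Lext_rev hu, Set.ncard_image_of_injective _ List.reverse_injective]; exact h.2.2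
  · rw [Rext_rev hu, Set.ncard_image_of_injective _ List.reverse_injective]; exact h.2.1

lemma side {d : ℕ} (hd : 3 ≤ d) {s : List ℕ} {p : ℕ} (hp : p < d - 1) {S : ℕ → Prop}
    {a1 a2 : ℕ} (h1 : S a1) (h2 : S a2) (hne : a1 ≠ a2)
    (hR : ∀ a, S a → ∃ a', (a' = p ∨ a' = d - 1) ∧ R d s a a') :
    s = (if p = d - 2 then [d - 1] else []) ∧ ∀ a, S a → a = (p + 1) % (d - 1) ∨ a = d - 1 := by
  have hmod : (p = d - 2 ∧ (p + 1) % (d - 1) = 0) ∨ (p ≠ d - 2 ∧ (p + 1) % (d - 1) = p + 1) := by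
    by_cases h : p = d - 2
    · left
      have : p + 1 = d - 1 := by omega
      exact ⟨h, by rw [this, Nat.mod_self]⟩
    · right
      exact ⟨h, Nat.mod_eq_of_lt (by omega)⟩
  obtain ⟨b1, hb1, _, r1⟩ := hR a1 h1
  obtain ⟨b2, hb2, _, r2⟩ := hR a2 h2
  have hs : s = (if p = d - 2 then [d - 1] else []) := by
    rcases r1 with ⟨rfl, r1⟩ | ⟨rfl, r1⟩ <;> simp at r2 ⊢ <;> omega
  refine ⟨hs, fun a ha => ?_⟩
  obtain ⟨b, hb, _, r⟩ := hR a ha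
  rcases r with ⟨e, r⟩ | ⟨e, r⟩
  · rw [e] at hs; simp at hs; omega
  · rw [e] at hs
    have : p = d - 2 := by
      by_contra hc
      simp [hc] at hs
    omega

lemma fmap_iter_lt {d : ℕ} (hd : 3 ≤ d) {k : ℕ} (hk : k ≤ d - 1) (n : ℕ) :
    ((fmap d)^[n] (Tinit d k)).1 < d - 1 ∧ ((fmap d)^[n] (Tinit d k)).2.2 < d - 1 := by
  cases n with
  | zero =>
    simp only [Function.iterate_zero, id, Tinit]
    split <;> simp <;> omega
  | succ n =>
    rw [Function.iterate_succ_apply']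
    exact ⟨Nat.mod_lt _ (by omega), Nat.mod_lt _ (by omega)⟩

lemma iter_F {d : ℕ} (hd : 3 ≤ d) (i k : ℕ) (h : i + k ≤ d - 2) :
    (fmap d)^[i] (Tinit d k) = (i, Fword d i, k + i) := by
  induction i with
  | zero =>
    have : k ≠ d - 1 := by omega
    simp [Tinit, this, Fword]
  | succ i ih =>
    rw [Function.iterate_succ_apply', ih (by omega)]
    have e1 : i ≠ d - 2 := by omega
    have e2 : k + i ≠ d - 2 := by omega
    simp only [fmap, e1, e2, if_false, Fword]
    rw [Nat.mod_eq_of_lt (by omega), Nat.mod_eq_of_lt (by omega)]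
    simp; omega

lemma F_rev (d i : ℕ) : (Fword d i).reverse = Fword d i := by
  induction i with
  | zero => rfl
  | succ i ih => rw [Fword, phiW_rev', ih]

lemma F_left {d : ℕ} (hd : 3 ≤ d) {u : ℕ → ℕ} (hu : IsPhiFixed d u) (i : ℕ) (hi : i ≤ d - 1) :
    IsFactorS (i :: Fword d i) u := by
  induction i with
  | zero =>
    have := fac_pre u 1
    simpa [pre, Fword, hu.1] using this
  | succ i ih =>
    have := fac_phi0 hu (ih (by omega))
    refine fac_infix this ⟨[0], [], ?_⟩
    rw [phiW_cons, Fword, phiL, if_pos (by omega)]; simp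

/-- The invariant. -/
def Inv (d : ℕ) (u : ℕ → ℕ) (w : List ℕ) : Prop :=
  (∃ i, i ≤ d - 2 ∧ w = Fword d i ∧ ∀ a b, IsFactorS (a :: w ++ [b]) u →
    (a = i ∧ i < b) ∨ (b = i ∧ i < a) ∨ (a = d - 1 ∧ b = d - 1)) ∨
  (∃ k n p q, k ≤ d - 1 ∧
    ((fmap d)^[n] (Tinit d k) = (p, w, q) ∨ (fmap d)^[n] (Tinit d k) = (q, w.reverse, p)) ∧
    (∀ a, IsFactorS (a :: w) u → a = p ∨ a = d - 1) ∧
    (∀ b, IsFactorS (w ++ [b]) u → b = q ∨ b = d - 1))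

lemma two_sided_l {u : ℕ → ℕ} {w : List ℕ} {a : ℕ} (h : IsFactorS (a :: w) u) :
    ∃ b, IsFactorS (a :: w ++ [b]) u := fac_right h

lemma two_sided_r {d : ℕ} {u : ℕ → ℕ} (hu : IsPhiFixed d u) {w : List ℕ} {b : ℕ}
    (h : IsFactorS (w ++ [b]) u) :
    ∃ a, IsFactorS (a :: w ++ [b]) u := fac_left hu h

lemma inv_step {d : ℕ} (hd : 3 ≤ d) {u : ℕ → ℕ} (hu : IsPhiFixed d u) {s v t : List ℕ}
    (hs : s = [] ∨ s = [d - 1]) (ht : t = [] ∨ t = [d - 1]) (hv : IsFactorS v u)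
    (hl : LS u (s ++ phiW d v ++ 0 :: t)) (hr : RS u (s ++ phiW d v ++ 0 :: t))
    (hI : Inv d u v) : Inv d u (s ++ phiW d v ++ 0 :: t) := by
  have pull := fun a b => ext_pull (a := a) (b := b) hd hu hs ht hv
  obtain ⟨a1, a2, ha, hl1, hl2⟩ := hl
  obtain ⟨b1, b2, hb, hr1, hr2⟩ := hr
  rcases hI with ⟨i, hi, rfl, hE⟩ | ⟨k, n, p, q, hk, hf, hp, hq⟩
  · have pull2 : ∀ a b, IsFactorS (a :: (s ++ phiW d (Fword d i) ++ 0 :: t) ++ [b]) u →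
        ∃ a' b', ((a' = i ∧ i < b') ∨ (b' = i ∧ i < a') ∨ (a' = d - 1 ∧ b' = d - 1)) ∧
          R d s a a' ∧ R d t b b' := by
      intro a b h
      obtain ⟨a', b', h1, h2, h3⟩ := pull a b h
      exact ⟨a', b', hE _ _ h1, h2, h3⟩
    have hA : (∀ a b, IsFactorS (a :: (s ++ phiW d (Fword d i) ++ 0 :: t) ++ [b]) u →
        a = d - 1) → False := by
      intro h
      obtain ⟨c1, hc1⟩ := two_sided_l hl1
      obtain ⟨c2, hc2⟩ := two_sided_l hl2
      exact ha ((h _ _ hc1).trans (h _ _ hc2).symm)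
    have hB : (∀ a b, IsFactorS (a :: (s ++ phiW d (Fword d i) ++ 0 :: t) ++ [b]) u →
        b = d - 1) → False := by
      intro h
      obtain ⟨c1, hc1⟩ := two_sided_r hu hr1
      obtain ⟨c2, hc2⟩ := two_sided_r hu hr2
      exact hb ((h _ _ hc1).trans (h _ _ hc2).symm)
    clear pull hl1 hl2 hr1 hr2
    rcases hs with rfl | rfl <;> rcases ht with rfl | rfl <;> simp [R] at pull2
    · left
      have hi2 : i ≠ d - 2 := by
        intro hc
        apply hA
        intro a b h
        obtain ⟨x, y, h⟩ := pull2 a b (by simpa using h)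
        omega
      refine ⟨i + 1, by omega, by simp [Fword], fun a b h => ?_⟩
      obtain ⟨x, y, h⟩ := pull2 a b (by simpa using h)
      omega
    · right
      have hi2 : i ≠ d - 2 := by
        intro hc
        apply hA
        intro a b h
        obtain ⟨x, y, h⟩ := pull2 a b (by simpa using h)
        omega
      refine ⟨d - 2 - i, i + 1, i + 1, 0, by omega, Or.inl ?_, ?_, ?_⟩
      · rw [Function.iterate_succ_apply', iter_F hd _ _ (by omega)]
        have e1 : i ≠ d - 2 := by omega
        have e2 : d - 2 - i + i = d - 2 := by omega
        have e3 : d - 2 + 1 = d - 1 := by omega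
        simp [fmap, e1, e2, e3]
        exact Nat.mod_eq_of_lt (by omega)
      · intro a h
        obtain ⟨b, h⟩ := two_sided_l h
        obtain ⟨x, y, h⟩ := pull2 a b (by simpa using h)
        omega
      · intro b h
        obtain ⟨a, h⟩ := two_sided_r hu h
        obtain ⟨x, y, h⟩ := pull2 a b (by simpa using h)
        omega
    · right
      have hi2 : i ≠ d - 2 := by
        intro hc
        apply hB
        intro a b h
        obtain ⟨x, y, h⟩ := pull2 a b (by simpa using h)
        omega
      refine ⟨d - 2 - i, i + 1, 0, i + 1, by omega, Or.inr ?_, ?_, ?_⟩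
      · rw [Function.iterate_succ_apply', iter_F hd _ _ (by omega)]
        have e1 : i ≠ d - 2 := by omega
        have e2 : d - 2 - i + i = d - 2 := by omega
        have e3 : d - 2 + 1 = d - 1 := by omega
        have e4 := phiW_rev d (Fword d i)
        rw [F_rev] at e4
        simp [fmap, e1, e2, e3]
        refine ⟨Nat.mod_eq_of_lt (by omega), ?_⟩
        rw [← List.cons_append, e4]; simp
      · intro a h
        obtain ⟨b, h⟩ := two_sided_l h
        obtain ⟨x, y, h⟩ := pull2 a b (by simpa using h)
        omega
      · intro b h
        obtain ⟨a, h⟩ := two_sided_r hu h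
        obtain ⟨x, y, h⟩ := pull2 a b (by simpa using h)
        omega
    · right
      have hi2 : i = d - 2 := by
        by_contra hc
        apply hA
        intro a b h
        obtain ⟨x, y, h⟩ := pull2 a b (by simpa using h)
        omega
      refine ⟨0, i + 1, 0, 0, by omega, Or.inl ?_, ?_, ?_⟩
      · rw [Function.iterate_succ_apply', iter_F hd _ _ (by omega)]
        have e3 : d - 2 + 1 = d - 1 := by omega
        simp [fmap, hi2, e3]
      · intro a h
        obtain ⟨b, h⟩ := two_sided_l h
        obtain ⟨x, y, h⟩ := pull2 a b (by simpa using h)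
        omega
      · intro b h
        obtain ⟨a, h⟩ := two_sided_r hu h
        obtain ⟨x, y, h⟩ := pull2 a b (by simpa using h)
        omega
  · right
    have hlt := fmap_iter_lt hd hk n
    have hpq : p < d - 1 ∧ q < d - 1 := by
      rcases hf with hf | hf <;> rw [hf] at hlt
      · exact hlt
      · exact hlt.symm
    obtain ⟨es, hS⟩ := side hd (s := s) hpq.1
      (S := fun a => IsFactorS (a :: (s ++ phiW d v ++ 0 :: t)) u) hl1 hl2 ha (by
        intro a h
        obtain ⟨b, h⟩ := two_sided_l h
        obtain ⟨a', b', h1, h2, h3⟩ := pull a b h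
        exact ⟨a', hp _ (fac_infix h1 ⟨[], [b'], by simp⟩), h2⟩)
    obtain ⟨et, hT⟩ := side hd (s := t) hpq.2
      (S := fun b => IsFactorS ((s ++ phiW d v ++ 0 :: t) ++ [b]) u) hr1 hr2 hb (by
        intro b h
        obtain ⟨a, h⟩ := two_sided_r hu h
        obtain ⟨a', b', h1, h2, h3⟩ := pull a b h
        exact ⟨b', hq _ (fac_infix h1 ⟨[a'], [], by simp⟩), h3⟩)
    refine ⟨k, n + 1, (p + 1) % (d - 1), (q + 1) % (d - 1), hk, ?_, hS, hT⟩
    rw [Function.iterate_succ_apply']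
    have er : ∀ x : List ℕ, x = [] ∨ x = [d - 1] → x.reverse = x := by
      rintro x (rfl | rfl) <;> rfl
    rcases hf with hf | hf
    · left
      rw [hf]; simp only [fmap]; rw [← es, ← et]; simp
    · right
      rw [hf]; simp only [fmap]; rw [← es, ← et]
      have e4 := phiW_rev d v
      simp only [List.reverse_append, List.reverse_cons, er s hs, er t ht]
      rw [List.append_assoc t, ← e4]
      simp

lemma inv_all {d : ℕ} (hd : 3 ≤ d) {u : ℕ → ℕ} (hu : IsPhiFixed d u) (N : ℕ) :
    ∀ w : List ℕ, w.length = N → IsFactorS w u → LS u w → RS u w → Inv d u w := by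
  induction N using Nat.strong_induction_on with
  | _ N ih =>
    intro w hN hw hl hr
    by_cases h0 : 0 ∈ w
    · obtain ⟨s, v, t, rfl, hs0, ht0, hv⟩ := decomp hd hu hw h0
      have hs : s = [] ∨ s = [d - 1] :=
        LS_head hd hu (r := phiW d v ++ 0 :: t) (by simpa using hl) hs0
      have ht : t = [] ∨ t = [d - 1] := by
        have h1 := RS_rev hu hr
        have := LS_head hd hu (s := t.reverse) (r := 0 :: (phiW d v).reverse ++ s.reverse)
          (by simpa using h1) (by simpa using ht0)
        rcases this with h | h
        · left; simpa using h
        · right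
          have := congrArg List.reverse h
          simpa using this
      refine inv_step hd hu hs ht hv hl hr (ih v.length ?_ v rfl hv ?_ ?_)
      · have := phiW_len d v
        simp at hN; omega
      · obtain ⟨a1, a2, ha, h1, h2⟩ := hl
        obtain ⟨c1, h1⟩ := two_sided_l h1
        obtain ⟨c2, h2⟩ := two_sided_l h2
        obtain ⟨x1, y1, f1, r1, -⟩ := ext_pull hd hu hs ht hv h1
        obtain ⟨x2, y2, f2, r2, -⟩ := ext_pull hd hu hs ht hv h2
        refine ⟨x1, x2, ?_, fac_infix f1 ⟨[], [y1], by simp⟩, fac_infix f2 ⟨[], [y2], by simp⟩⟩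
        rintro rfl
        exact ha (R_fun hd r1 r2)
      · obtain ⟨a1, a2, ha, h1, h2⟩ := hr
        obtain ⟨c1, h1⟩ := two_sided_r hu h1
        obtain ⟨c2, h2⟩ := two_sided_r hu h2
        obtain ⟨x1, y1, f1, -, r1⟩ := ext_pull hd hu hs ht hv h1
        obtain ⟨x2, y2, f2, -, r2⟩ := ext_pull hd hu hs ht hv h2
        refine ⟨y1, y2, ?_, fac_infix f1 ⟨[x1], [], by simp⟩, fac_infix f2 ⟨[x2], [], by simp⟩⟩
        rintro rfl
        exact ha (R_fun hd r1 r2)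
    · rcases LS_head hd hu (s := w) (r := []) (by simpa using hl) h0 with rfl | rfl
      · left
        exact ⟨0, by omega, rfl, fun a b h => fac_two hd hu h⟩
      · right
        refine ⟨d - 1, 0, 0, 0, le_rfl, Or.inl (by simp [Tinit]), ?_, ?_⟩
        · intro a h
          have := fac_two hd hu h
          omega
        · intro b h
          have := fac_two hd hu h
          omega

theorem statement10 (d : ℕ) (hd : 3 ≤ d) (u : ℕ → ℕ) (hu : IsPhiFixed d u)
    (w : List ℕ) (hw : Bispecial u w) :
    ∃ k : ℕ, k ≤ d - 1 ∧ ∃ n : ℕ,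
      TripleMem d u ((fmap d)^[n] (Tinit d k)) ∧
      (((fmap d)^[n] (Tinit d k)).2.1 = w ∨
        ((fmap d)^[n] (Tinit d k)).2.1 = w.reverse) := by
  obtain ⟨hl, hr⟩ := bisp_LS hw
  rcases inv_all hd hu _ w rfl hw.1 hl hr with ⟨i, hi, rfl, -⟩ | ⟨k, n, p, q, hk, hf, hp, hq⟩
  · refine ⟨0, by omega, i, ?_⟩
    rw [iter_F hd i 0 (by omega)]
    have h1 := F_left hd hu i (by omega)
    have h2 := fac_rev hu h1
    rw [List.reverse_cons, F_rev] at h2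
    refine ⟨⟨hw, ?_, ?_, h1, ?_⟩, Or.inl rfl⟩
    · show i < d - 1
      omega
    · show 0 + i < d - 1
      omega
    · simpa using h2
  · refine ⟨k, hk, n, ?_⟩
    have hlt := fmap_iter_lt hd hk n
    have h1 : IsFactorS (p :: w) u := by
      obtain ⟨a1, a2, ha, h1, h2⟩ := hl
      rcases hp _ h1 with rfl | e1
      · exact h1
      · rcases hp _ h2 with rfl | e2
        · exact h2
        · omega
    have h2 : IsFactorS (w ++ [q]) u := by
      obtain ⟨a1, a2, ha, h1, h2⟩ := hr
      rcases hq _ h1 with rfl | e1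
      · exact h1
      · rcases hq _ h2 with rfl | e2
        · exact h2
        · omega
    rcases hf with hf | hf <;> rw [hf] at hlt ⊢
    · exact ⟨⟨hw, hlt.1, hlt.2, h1, h2⟩, Or.inl rfl⟩
    · exact ⟨⟨bisp_rev hu hw, hlt.1, hlt.2, by simpa using fac_rev hu h2,
        by simpa using fac_rev hu h1⟩, Or.inr rfl⟩

end RichRT
end

section
/- Let M ∈ ℤ^{d×d} be a nonnegative primitive matrix whose spectral radius Λ satisfies Λ > 1, let z ∈ ℝ^d be a positive left eigenvector of M for Λ (i.e., zM = Λz), and let e = (1,1,…,1) ∈ ℝ^d. Suppose (x_n), (y_n), (ℓ_n) are sequences of nonnegative integer column vectors in ℤ^d with y_0 ≠ 0, satisfying x_{n+1} = M x_n + ℓ_n and y_{n+1} = M y_n for all n ∈ ℕ, and (ℓ_n) is purely periodic with period p ∈ ℕ, p ≥ 1. Then lim_{n→∞} (e x_n)/(e y_n) = (z c + (Λ^p − 1) z x_0) / ((Λ^p − 1) z y_0), where c = M^{p−1}ℓ_0 + M^{p−2}ℓ_1 + ⋯ + Mℓ_{p−2} + ℓ_{p−1}. -/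
namespace RichRT

variable {A : Type*}

open Filter Topology

/-- Iterated averaging with an eventually positive averaging kernel converges to a constant. -/
lemma avg_conv {ι : Type*} [Fintype ι] [Nonempty ι] (r : ℕ → ι → ℝ) (Q R : ι → ι → ℝ) (k : ℕ)
    (hQ0 : ∀ j i, 0 ≤ Q j i) (hQ1 : ∀ j, ∑ i, Q j i = 1)
    (hQ : ∀ n j, r (n + 1) j = ∑ i, Q j i * r n i)
    (hR0 : ∀ j i, 0 < R j i) (hR1 : ∀ j, ∑ i, R j i = 1)
    (hR : ∀ n j, r (n + k) j = ∑ i, R j i * r n i)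
    (h0 : ∀ j, 0 < r 0 j) :
    ∃ α C : ℝ, 0 < α ∧ (∀ n j, 0 ≤ r n j ∧ r n j ≤ C) ∧
      ∀ j, Tendsto (fun n => r n j) atTop (𝓝 α) := by
  classical
  obtain ⟨δ, hδ, hδR⟩ : ∃ δ : ℝ, 0 < δ ∧ ∀ j i, δ ≤ R j i := by
    obtain ⟨q, hq⟩ := Finite.exists_min (fun q : ι × ι => R q.1 q.2)
    exact ⟨R q.1 q.2, hR0 _ _, fun j i => hq (j, i)⟩
  choose hi hhi using fun n => Finite.exists_max (r n)
  choose lo hlo using fun n => Finite.exists_min (r n)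
  set a : ℕ → ℝ := fun n => r n (hi n) with ha
  set b : ℕ → ℝ := fun n => r n (lo n) with hb
  have hanti : Antitone a := by
    apply antitone_nat_of_succ_le
    intro n
    simp only [ha]
    rw [hQ]
    calc ∑ i, Q (hi (n+1)) i * r n i ≤ ∑ i, Q (hi (n+1)) i * r n (hi n) :=
          Finset.sum_le_sum fun i _ => mul_le_mul_of_nonneg_left (hhi n i) (hQ0 _ _)
      _ = r n (hi n) := by rw [← Finset.sum_mul, hQ1, one_mul]
  have hmono : Monotone b := by
    apply monotone_nat_of_le_succ
    intro n
    simp only [hb]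
    rw [hQ]
    calc r n (lo n) = ∑ i, Q (lo (n+1)) i * r n (lo n) := by
          rw [← Finset.sum_mul, hQ1, one_mul]
      _ ≤ _ := Finset.sum_le_sum fun i _ => mul_le_mul_of_nonneg_left (hlo n i) (hQ0 _ _)
  have hba : ∀ n, b n ≤ a n := fun n => hlo n _
  have hcon : ∀ n, a (n + k) ≤ a n - δ * (a n - b n) := by
    intro n
    have h1 : ∑ i, R (hi (n+k)) i * (a n - r n i) ≥ δ * (a n - b n) := by
      calc ∑ i, R (hi (n+k)) i * (a n - r n i) ≥ R (hi (n+k)) (lo n) * (a n - r n (lo n)) :=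
            Finset.single_le_sum (f := fun i => R (hi (n+k)) i * (a n - r n i))
              (fun i _ => mul_nonneg (hR0 _ _).le (sub_nonneg.2 (hhi n i))) (Finset.mem_univ _)
        _ ≥ δ * (a n - b n) :=
            mul_le_mul_of_nonneg_right (hδR _ _) (sub_nonneg.2 (hba n))
    simp only [mul_sub, Finset.sum_sub_distrib, ← Finset.sum_mul, hR1, ← hR] at h1
    simp only [ha] at *
    linarith
  have hA : Tendsto a atTop (𝓝 (⨅ n, a n)) :=
    tendsto_atTop_ciInf hanti ⟨b 0, by rintro _ ⟨n, rfl⟩; exact (hmono (Nat.zero_le n)).trans (hba n)⟩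
  have hB : Tendsto b atTop (𝓝 (⨆ n, b n)) :=
    tendsto_atTop_ciSup hmono ⟨a 0, by rintro _ ⟨n, rfl⟩; exact (hba n).trans (hanti (Nat.zero_le n))⟩
  set A := ⨅ n, a n
  set B := ⨆ n, b n
  have hBA : B ≤ A := le_of_tendsto_of_tendsto' hB hA hba
  have hlim : A ≤ A - δ * (A - B) :=
    le_of_tendsto_of_tendsto' ((tendsto_add_atTop_iff_nat k).2 hA)
      (hA.sub ((hA.sub hB).const_mul δ)) hcon
  have hAB : A = B := by
    have : A - B ≤ 0 := by
      by_contra hc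
      push Not at hc
      nlinarith [mul_pos hδ hc]
    linarith
  have hb0 : 0 < b 0 := h0 _
  refine ⟨A, a 0, ?_, ?_, ?_⟩
  · rw [hAB]
    exact lt_of_lt_of_le hb0 (hmono.ge_of_tendsto hB 0)
  · intro n j
    exact ⟨hb0.le.trans ((hmono (Nat.zero_le n)).trans (hlo n j)),
      (hhi n j).trans (hanti (Nat.zero_le n))⟩
  · intro j
    exact tendsto_of_tendsto_of_tendsto_of_le_of_le (hAB ▸ hB) hA (fun n => hlo n j)
      (fun n => hhi n j)

lemma vecMul_pow_eig {d : ℕ} (W : Matrix (Fin d) (Fin d) ℝ) (Λ : ℝ) (z : Fin d → ℝ)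
    (hzM : Matrix.vecMul z W = Λ • z) (k : ℕ) : Matrix.vecMul z (W ^ k) = Λ ^ k • z := by
  induction k with
  | zero => simp
  | succ k ih =>
    rw [pow_succ, ← Matrix.vecMul_vecMul, ih, Matrix.smul_vecMul, hzM, smul_smul, pow_succ]

/-- Perron–Frobenius type convergence of column sums. -/
lemma colsum_conv {d : ℕ} [Nonempty (Fin d)] (W : Matrix (Fin d) (Fin d) ℝ)
    (hW0 : ∀ i j, 0 ≤ W i j) (k : ℕ) (hk : ∀ i j, 0 < (W ^ k) i j)
    (Λ : ℝ) (hΛ : 0 < Λ) (z : Fin d → ℝ) (hz : ∀ i, 0 < z i)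
    (hzM : Matrix.vecMul z W = Λ • z) :
    ∃ α C : ℝ, 0 < α ∧
      (∀ n j, 0 ≤ (∑ i, (W ^ n) i j) / (Λ ^ n * z j) ∧ (∑ i, (W ^ n) i j) / (Λ ^ n * z j) ≤ C) ∧
      ∀ j, Tendsto (fun n => (∑ i, (W ^ n) i j) / (Λ ^ n * z j)) atTop (𝓝 α) := by
  have hsum : ∀ k j, ∑ i, z i * (W ^ k) i j / (Λ ^ k * z j) = 1 := by
    intro k j
    have := congrFun (vecMul_pow_eig W Λ z hzM k) j
    simp only [Matrix.vecMul, dotProduct, Pi.smul_apply, smul_eq_mul] at this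
    rw [← Finset.sum_div, this]
    exact div_self (mul_pos (pow_pos hΛ _) (hz j)).ne'
  have hrec : ∀ k n j, (∑ i, (W ^ (n + k)) i j) / (Λ ^ (n + k) * z j)
      = ∑ i, z i * (W ^ k) i j / (Λ ^ k * z j) * ((∑ l, (W ^ n) l i) / (Λ ^ n * z i)) := by
    intro k n j
    simp only [pow_add, Matrix.mul_apply]
    rw [Finset.sum_comm, Finset.sum_div]
    refine Finset.sum_congr rfl fun i _ => ?_
    rw [← Finset.sum_mul]
    have := (hz i).ne'
    have := (hz j).ne'
    field_simp
  refine avg_conv (fun n j => (∑ i, (W ^ n) i j) / (Λ ^ n * z j))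
    (fun j i => z i * (W ^ 1) i j / (Λ ^ 1 * z j))
    (fun j i => z i * (W ^ k) i j / (Λ ^ k * z j)) k ?_ (hsum 1) (hrec 1) ?_ (hsum k) (hrec k) ?_
  · intro j i
    rw [pow_one, pow_one]
    exact div_nonneg (mul_nonneg (hz i).le (hW0 _ _)) (mul_pos hΛ (hz j)).le
  · intro j i
    exact div_pos (mul_pos (hz i) (hk _ _)) (mul_pos (pow_pos hΛ _) (hz j))
  · intro j
    simp [Matrix.one_apply, hz j]

/-- Asymptotics of the affine recursion. -/
lemma affine_conv {d : ℕ} (W : Matrix (Fin d) (Fin d) ℝ)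
    (Λ : ℝ) (hΛ : 1 < Λ) (z : Fin d → ℝ) (hz : ∀ i, 0 < z i) (α C : ℝ)
    (hC : ∀ n j, 0 ≤ (∑ i, (W ^ n) i j) / (Λ ^ n * z j) ∧
      (∑ i, (W ^ n) i j) / (Λ ^ n * z j) ≤ C)
    (hα : ∀ j, Tendsto (fun n => (∑ i, (W ^ n) i j) / (Λ ^ n * z j)) atTop (𝓝 α))
    (v l : ℕ → Fin d → ℝ) (hl0 : ∀ n i, 0 ≤ l n i)
    [Nonempty (Fin d)] (hv : ∀ n, v (n + 1) = W.mulVec (v n) + l n)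
    (K : ℝ) (hK : ∀ n, ∑ i, z i * l n i ≤ K) :
    Tendsto (fun n => (∑ i, v n i) / Λ ^ n) atTop
      (𝓝 (α * (∑ i, z i * v 0 i + ∑' m, (∑ i, z i * l m i) / Λ ^ (m + 1)))) := by
  have hΛ0 : 0 < Λ := by linarith
  set r : ℕ → Fin d → ℝ := fun n j => (∑ i, (W ^ n) i j) / (Λ ^ n * z j) with hr
  have hsol : ∀ n, v n = (W ^ n).mulVec (v 0)
      + ∑ m ∈ Finset.range n, (W ^ (n - 1 - m)).mulVec (l m) := by
    intro n
    induction n with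
    | zero => simp
    | succ n ih =>
      rw [hv, ih, Finset.sum_range_succ, Matrix.mulVec_add, Matrix.mulVec_mulVec, ← pow_succ',
        Matrix.mulVec_sum, add_assoc]
      congr 1
      simp only [Nat.add_sub_cancel, Nat.sub_self, pow_zero, Matrix.one_mulVec]
      congr 1
      refine Finset.sum_congr rfl fun m hm => ?_
      rw [Matrix.mulVec_mulVec, ← pow_succ']
      congr 2
      have := Finset.mem_range.1 hm
      omega
  have hE : ∀ n (u : Fin d → ℝ), ∑ i, (W ^ n).mulVec u i = Λ ^ n * ∑ j, r n j * (z j * u j) := by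
    intro n u
    simp only [Matrix.mulVec, dotProduct]
    rw [Finset.sum_comm, Finset.mul_sum]
    refine Finset.sum_congr rfl fun j _ => ?_
    rw [← Finset.sum_mul, hr]
    have := (hz j).ne'
    field_simp
  have hT : ∀ u : Fin d → ℝ, Tendsto (fun n => ∑ j, r n j * (z j * u j)) atTop
      (𝓝 (α * ∑ j, z j * u j)) := by
    intro u
    rw [Finset.mul_sum]
    exact tendsto_finsetSum _ fun j _ => (hα j).mul_const _
  let F : ℕ → ℕ → ℝ := fun n m =>
    if m < n then (∑ j, r (n - 1 - m) j * (z j * l m j)) / Λ ^ (m + 1) else 0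
  have hform : ∀ n, (∑ i, v n i) / Λ ^ n = ∑ j, r n j * (z j * v 0 j) + ∑' m, F n m := by
    intro n
    have h1 : ∑' m, F n m = ∑ m ∈ Finset.range n, F n m := by
      apply tsum_eq_sum
      intro m hm
      simp only [F]
      rw [if_neg (by simpa using hm)]
    have hp := pow_pos hΛ0 n
    rw [h1, hsol n]
    simp only [Pi.add_apply, Finset.sum_add_distrib, Finset.sum_apply]
    rw [hE, Finset.sum_comm, add_div, Finset.sum_div]
    congr 1
    · field_simp
    · refine Finset.sum_congr rfl fun m hm => ?_
      have hm' := Finset.mem_range.1 hm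
      simp only [F]
      rw [hE, if_pos hm']
      have : Λ ^ n = Λ ^ (n - 1 - m) * Λ ^ (m + 1) := by
        rw [← pow_add]; congr 1; omega
      rw [this]
      have := pow_pos hΛ0 (n - 1 - m)
      have := pow_pos hΛ0 (m + 1)
      field_simp
  simp only [hform, mul_add, ← tsum_mul_left]
  refine (hT (v 0)).add ?_
  have hgeo : Summable fun m : ℕ => C * K / Λ * (Λ⁻¹) ^ m :=
    (summable_geometric_of_lt_one (inv_pos.2 hΛ0).le (inv_lt_one_of_one_lt₀ hΛ)).mul_left _
  refine tendsto_tsum_of_dominated_convergence (bound := fun m : ℕ => C * K / Λ * (Λ⁻¹) ^ m)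
    hgeo ?_ ?_
  · intro m
    have h1 : Tendsto (fun n => n - 1 - m) atTop atTop := by
      simp only [Nat.sub_sub]
      exact tendsto_sub_atTop_nat _
    have h2 := ((hT (l m)).comp h1).div_const (Λ ^ (m + 1))
    rw [mul_div_assoc] at h2
    refine h2.congr' ?_
    filter_upwards [eventually_gt_atTop m] with n hn
    simp only [F, Function.comp]
    rw [if_pos hn]
  · refine Eventually.of_forall fun n m => ?_
    have hs0 : 0 ≤ ∑ i, z i * l m i :=
      Finset.sum_nonneg fun i _ => mul_nonneg (hz i).le (hl0 m i)
    have heq : C * K / Λ * (Λ⁻¹) ^ m = C * K / Λ ^ (m + 1) := by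
      rw [pow_succ, inv_pow]
      field_simp
    rw [heq]
    obtain ⟨i0⟩ := ‹Nonempty (Fin d)›
    have hC0 : 0 ≤ C := (hC 0 i0).1.trans (hC 0 i0).2
    have hpp := pow_pos hΛ0 (m + 1)
    have hCK : 0 ≤ C * K := mul_nonneg hC0 (hs0.trans (hK m))
    simp only [F]
    split_ifs
    · rw [Real.norm_of_nonneg]
      · refine div_le_div_of_nonneg_right ?_ hpp.le
        calc _ ≤ ∑ j, C * (z j * l m j) := Finset.sum_le_sum fun j _ =>
              mul_le_mul_of_nonneg_right (hC _ j).2 (mul_nonneg (hz j).le (hl0 m j))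
          _ = C * ∑ j, z j * l m j := by rw [Finset.mul_sum]
          _ ≤ _ := mul_le_mul_of_nonneg_left (hK m) hC0
      · exact div_nonneg (Finset.sum_nonneg fun j _ =>
          mul_nonneg (hC _ j).1 (mul_nonneg (hz j).le (hl0 m j))) hpp.le
    · rw [norm_zero]
      exact div_nonneg hCK hpp.le

/-- The sum of the periodic series. -/
lemma periodic_tsum (Λ : ℝ) (hΛ : 1 < Λ) (s : ℕ → ℝ) (p : ℕ) (hp : 1 ≤ p)
    (hper : ∀ n, s (n + p) = s n) (K : ℝ) (h0 : ∀ n, 0 ≤ s n) (hK : ∀ n, s n ≤ K) :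
    (Λ ^ p - 1) * ∑' m, s m / Λ ^ (m + 1) = ∑ m ∈ Finset.range p, Λ ^ (p - 1 - m) * s m := by
  have hΛ0 : 0 < Λ := by linarith
  have hgeo : Summable fun m : ℕ => K / Λ * (Λ⁻¹) ^ m :=
    (summable_geometric_of_lt_one (inv_pos.2 hΛ0).le (inv_lt_one_of_one_lt₀ hΛ)).mul_left _
  have hS : Summable fun m : ℕ => s m / Λ ^ (m + 1) := by
    refine Summable.of_nonneg_of_le (fun m => div_nonneg (h0 m) (pow_pos hΛ0 _).le) ?_ hgeo
    intro m
    have heq : K / Λ * (Λ⁻¹) ^ m = K / Λ ^ (m + 1) := by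
      rw [pow_succ, inv_pow]
      field_simp
    rw [heq]
    exact div_le_div_of_nonneg_right (hK m) (pow_pos hΛ0 _).le
  have h1 := hS.sum_add_tsum_nat_add p
  have h2 : ∀ m, s (m + p) / Λ ^ (m + p + 1) = (Λ ^ p)⁻¹ * (s m / Λ ^ (m + 1)) := by
    intro m
    rw [hper, show m + p + 1 = p + (m + 1) by ring, pow_add]
    have := pow_pos hΛ0 p
    have := pow_pos hΛ0 (m + 1)
    field_simp
  simp only [h2, tsum_mul_left] at h1
  have hpp := pow_pos hΛ0 p
  set S := ∑' m, s m / Λ ^ (m + 1)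
  have h3 : (Λ ^ p - 1) * S = Λ ^ p * ∑ m ∈ Finset.range p, s m / Λ ^ (m + 1) := by
    have : ∑ m ∈ Finset.range p, s m / Λ ^ (m + 1) = S - (Λ ^ p)⁻¹ * S := by linarith
    rw [this]
    field_simp
  rw [h3, Finset.mul_sum]
  refine Finset.sum_congr rfl fun m hm => ?_
  have hm' := Finset.mem_range.1 hm
  have : Λ ^ p = Λ ^ (p - 1 - m) * Λ ^ (m + 1) := by
    rw [← pow_add]; congr 1; omega
  rw [this]
  have := pow_pos hΛ0 (m + 1)
  field_simp

/-- Let `M ∈ ℤ^{d×d}` be a nonnegative primitive matrix with spectral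
radius `Λ > 1` and positive left eigenvector `z` for `Λ` (by Perron–Frobenius, a
nonnegative primitive matrix having a positive left eigenvector for `Λ` exactly means
`Λ` is its spectral radius). If `(x_n)`, `(y_n)`, `(ℓ_n)` are nonnegative integer vector
sequences with `y_0 ≠ 0`, `x_{n+1} = M x_n + ℓ_n`, `y_{n+1} = M y_n`, and `(ℓ_n)` purely
periodic with period `p ≥ 1`, then `(e x_n)/(e y_n)` tends to
`(z c + (Λ^p − 1) z x_0) / ((Λ^p − 1) z y_0)` where `c = ∑_{m<p} M^{p−1−m} ℓ_m`. -/
theorem statement17 (d : ℕ) (M : Matrix (Fin d) (Fin d) ℤ)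
    (hM0 : ∀ i j, 0 ≤ M i j) (hprim : ∃ k : ℕ, ∀ i j, 0 < (M ^ k) i j)
    (Λ : ℝ) (hΛ : 1 < Λ) (z : Fin d → ℝ) (hz : ∀ i, 0 < z i)
    (hzM : Matrix.vecMul z (M.map (Int.cast : ℤ → ℝ)) = Λ • z)
    (x y ℓ : ℕ → Fin d → ℤ)
    (hx0 : ∀ n i, 0 ≤ x n i) (hy0 : ∀ n i, 0 ≤ y n i) (hl0 : ∀ n i, 0 ≤ ℓ n i)
    (hy00 : y 0 ≠ 0)
    (hx : ∀ n, x (n + 1) = M.mulVec (x n) + ℓ n)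
    (hy : ∀ n, y (n + 1) = M.mulVec (y n))
    (p : ℕ) (hp : 1 ≤ p) (hper : ∀ n, ℓ (n + p) = ℓ n) :
    Filter.Tendsto
      (fun n : ℕ => (∑ i, ((x n i : ℤ) : ℝ)) / (∑ i, ((y n i : ℤ) : ℝ)))
      Filter.atTop
      (nhds (((∑ i, z i *
          (((∑ m ∈ Finset.range p, (M ^ (p - 1 - m)).mulVec (ℓ m)) i : ℤ) : ℝ)) +
            (Λ ^ p - 1) * ∑ i, z i * ((x 0 i : ℤ) : ℝ)) /
          ((Λ ^ p - 1) * ∑ i, z i * ((y 0 i : ℤ) : ℝ)))) := by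
  classical
  obtain ⟨k, hk⟩ := hprim
  have hΛ0 : 0 < Λ := by linarith
  obtain ⟨i0, hi0⟩ : ∃ i, y 0 i ≠ 0 := Function.ne_iff.1 hy00
  haveI : Nonempty (Fin d) := ⟨i0⟩
  set W : Matrix (Fin d) (Fin d) ℝ := M.map (Int.cast : ℤ → ℝ) with hW
  have hWpow : ∀ n, W ^ n = (M ^ n).map (Int.cast : ℤ → ℝ) := by
    intro n
    have := map_pow (Int.castRingHom ℝ).mapMatrix M n
    simpa [RingHom.mapMatrix_apply, hW] using this.symm
  have hcast : ∀ n (u : Fin d → ℤ) i, (((M ^ n).mulVec u i : ℤ) : ℝ)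
      = (W ^ n).mulVec (fun j => (u j : ℝ)) i := by
    intro n u i
    rw [hWpow]
    simp [Matrix.mulVec, dotProduct]
  obtain ⟨α, C, hα0, hC, hα⟩ := colsum_conv W (fun i j => by simpa [hW] using hM0 i j) k
    (fun i j => by rw [hWpow]; simpa using hk i j) Λ hΛ0 z hz hzM
  set s : ℕ → ℝ := fun m => ∑ i, z i * (ℓ m i : ℝ) with hs
  have hs0 : ∀ m, 0 ≤ s m := fun m =>
    Finset.sum_nonneg fun i _ => mul_nonneg (hz i).le (by exact_mod_cast hl0 m i)
  have hsper : ∀ n, s (n + p) = s n := fun n => by simp only [hs, hper]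
  have hsK : ∀ n, s n ≤ ∑ m ∈ Finset.range p, s m := by
    intro n
    have h1 : s n = s (n % p) := (Function.Periodic.map_mod_nat hsper n).symm
    rw [h1]
    exact Finset.single_le_sum (f := s) (fun m _ => hs0 m)
      (Finset.mem_range.2 (Nat.mod_lt _ hp))
  have hX := affine_conv W Λ hΛ z hz α C hC hα (fun n i => (x n i : ℝ)) (fun n i => (ℓ n i : ℝ))
    (fun n i => by exact_mod_cast hl0 n i)
    (fun n => by
      funext i
      have h := hcast 1 (x n) i
      rw [pow_one, pow_one] at h
      rw [hx n, Pi.add_apply, Pi.add_apply, Int.cast_add, h])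
    _ hsK
  have hY := affine_conv W Λ hΛ z hz α C hC hα (fun n i => (y n i : ℝ)) (fun _ _ => 0)
    (fun _ _ => le_rfl)
    (fun n => by
      funext i
      have h := hcast 1 (y n) i
      rw [pow_one, pow_one] at h
      rw [hy n, Pi.add_apply, h, add_zero])
    0 (fun n => by simp)
  simp only [mul_zero, Finset.sum_const_zero, zero_div, tsum_zero, add_zero] at hY
  have hper' := periodic_tsum Λ hΛ s p hp hsper _ hs0 hsK
  have hc : ∑ i, z i * (((∑ m ∈ Finset.range p, (M ^ (p - 1 - m)).mulVec (ℓ m)) i : ℤ) : ℝ)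
      = ∑ m ∈ Finset.range p, Λ ^ (p - 1 - m) * s m := by
    simp only [Finset.sum_apply, Int.cast_sum, hcast, Finset.mul_sum]
    rw [Finset.sum_comm]
    refine Finset.sum_congr rfl fun m _ => ?_
    have h1 := Matrix.dotProduct_mulVec z (W ^ (p - 1 - m)) (fun j => (ℓ m j : ℝ))
    rw [vecMul_pow_eig W Λ z hzM, smul_dotProduct] at h1
    simpa [dotProduct, hs, Finset.mul_sum] using h1
  have hzy : 0 < ∑ i, z i * (y 0 i : ℝ) := by
    refine Finset.sum_pos' (fun i _ => mul_nonneg (hz i).le (by exact_mod_cast hy0 0 i))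
      ⟨i0, Finset.mem_univ _, mul_pos (hz i0) ?_⟩
    exact_mod_cast lt_of_le_of_ne (hy0 0 i0) (Ne.symm hi0)
  have hΛp : 0 < Λ ^ p - 1 := sub_pos.2 (one_lt_pow₀ hΛ (by omega))
  have hfin := hX.div hY (mul_pos hα0 hzy).ne'
  rw [hc, ← hper']
  convert hfin using 2
  · rename_i n
    have := pow_pos hΛ0 n
    simp only [Pi.div_apply]
    rw [div_div_div_cancel_right₀ this.ne']
  · rw [← mul_add, mul_div_mul_left _ _ hΛp.ne', mul_div_mul_left _ _ hα0.ne', add_comm]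
end RichRT
end
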